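/- arXiv:2511.08961 — 2 statements merged into one kernel-verified Lean document; each statement's English description precedes it below -/
import Mathlib

section
/- Let z be a C² solution of -z''(ρ) = (1/4) e^{g(z(ρ)) - ρ} on (ρ₀, ∞) with z(ρ) → ∞ as ρ → ∞, where g satisfies (G1). Then z'(ρ) → 0 as ρ → ∞, z'(ρ) ≥ 0 for large ρ, and z'(ρ) = ∫_ρ^∞ (1/4) e^{g(z(s)) - s} ds. -/
open Real Filter Set MeasureTheory

/-- A function bounded above by a constant on a half-line has no integrable reciprocal there. -/
lemma not_integrableOn_one_div_of_le {g : ℝ → ℝ} {a C : ℝ}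
    (hpos : ∀ s ∈ Ici a, 0 < g s) (hle : ∀ s ∈ Ici a, g s ≤ C) :
    ¬ IntegrableOn (fun u => 1 / g u) (Ici a) := by
  intro h
  have hC : 0 < C := (hpos a self_mem_Ici).trans_le (hle a self_mem_Ici)
  have hconst : IntegrableOn (fun _ : ℝ => 1 / C) (Ici a) := by
    refine Integrable.mono' h aestronglyMeasurable_const ?_
    refine (ae_restrict_iff' measurableSet_Ici).2 (Eventually.of_forall fun u hu => ?_)
    rw [Real.norm_of_nonneg (by positivity)]
    exact one_div_le_one_div_of_le (hpos u hu) (hle u hu)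
  rw [integrableOn_const_iff] at hconst
  simp [hC.ne'] at hconst

/-- A positive function with integrable reciprocal and `g g'' / g' ^ 2` tending to a positive limit
is eventually monotone. -/
lemma exists_monotoneOn_Ici_of_tendsto {g : ℝ → ℝ} {s₀ l : ℝ} (hl : 0 < l)
    (hgpos : ∀ s ∈ Ici s₀, 0 < g s)
    (hint : ∀ᶠ s in atTop, IntegrableOn (fun u => 1 / g u) (Ici s))
    (hlim : Tendsto (fun s => g s * deriv (deriv g) s / (deriv g s) ^ 2) atTop (nhds l)) :
    ∃ b, s₀ ≤ b ∧ IntegrableOn (fun u => 1 / g u) (Ici b) ∧ MonotoneOn g (Ici b) := by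
  obtain ⟨a, ha⟩ := eventually_atTop.1
    ((hlim.eventually_const_lt hl).and (hint.and (eventually_ge_atTop s₀)))
  have hd : ∀ s ∈ Ici a, deriv g s ≠ 0 := fun s hs h0 => by
    have := (ha s hs).1
    simp [h0] at this
  have hdd : ∀ s ∈ Ici a, 0 < deriv (deriv g) s := fun s hs => by
    have h1 := (ha s hs).1
    have h2 : 0 < deriv g s ^ 2 := by have := hd s hs; positivity
    have h3 := (div_pos_iff_of_pos_right h2).1 h1
    exact (pos_iff_pos_of_mul_pos h3).1 (hgpos s (ha s hs).2.2)
  have hmono : StrictMonoOn (deriv g) (Ici a) := by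
    refine strictMonoOn_of_deriv_pos (convex_Ici a) (fun s hs => ?_) fun s hs => ?_
    · exact (differentiableAt_of_deriv_ne_zero (hdd s hs).ne').continuousAt.continuousWithinAt
    · exact hdd s (interior_subset hs)
  have hdiff : ∀ s ∈ Ici a, DifferentiableAt ℝ g s := fun s hs =>
    differentiableAt_of_deriv_ne_zero (hd s hs)
  by_cases hex : ∃ b ∈ Ici a, 0 ≤ deriv g b
  · obtain ⟨b, hb, hb0⟩ := hex
    have hsub : Ici b ⊆ Ici a := Ici_subset_Ici.2 hb
    refine ⟨b, (ha b hb).2.2, (ha b hb).2.1, ?_⟩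
    refine monotoneOn_of_deriv_nonneg (convex_Ici b)
      (fun s hs => (hdiff s (hsub hs)).continuousAt.continuousWithinAt)
      (fun s hs => (hdiff s (hsub (interior_subset hs))).differentiableWithinAt) fun s hs => ?_
    have hs' := interior_subset hs
    exact hb0.trans (hmono.monotoneOn hb (hsub hs') hs')
  · push Not at hex
    have hanti : AntitoneOn g (Ici a) := antitoneOn_of_deriv_nonpos (convex_Ici a)
      (fun s hs => (hdiff s hs).continuousAt.continuousWithinAt)
      (fun s hs => (hdiff s (interior_subset hs)).differentiableWithinAt)
      fun s hs => (hex s (interior_subset hs)).le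
    exact absurd (ha a le_rfl).2.1 (not_integrableOn_one_div_of_le (C := g a)
      (fun s hs => hgpos s (ha s hs).2.2) fun s hs => hanti self_mem_Ici hs hs)

/-- A positive monotone function with integrable reciprocal grows superlinearly. -/
lemma eventually_mul_le_of_integrableOn_one_div {g : ℝ → ℝ} {b : ℝ}
    (hgpos : ∀ s ∈ Ici b, 0 < g s) (hint : IntegrableOn (fun u => 1 / g u) (Ici b))
    (hmono : MonotoneOn g (Ici b)) {C : ℝ} (hC : 0 < C) :
    ∀ᶠ s in atTop, C * s ≤ g s := by
  have hI := intervalIntegral_tendsto_integral_Ioi b (hint.mono_set Ioi_subset_Ici_self) tendsto_id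
  have hhalf : Tendsto (fun s : ℝ => s / 2) atTop atTop :=
    tendsto_id.atTop_div_const two_pos
  have hdiff := hI.sub (hI.comp hhalf)
  rw [sub_self] at hdiff
  have hsmall : (0 : ℝ) < 1 / (2 * C) := by positivity
  filter_upwards [hdiff.eventually_lt_const hsmall, hhalf.eventually_ge_atTop b,
    eventually_gt_atTop 0] with s hs hbs hs0
  have hss : s / 2 ≤ s := by linarith
  have hbs' : b ≤ s := hbs.trans hss
  have hii : ∀ x y, b ≤ x → x ≤ y → IntervalIntegrable (fun u => 1 / g u) volume x y :=
    fun x y hx hxy => (intervalIntegrable_iff_integrableOn_Icc_of_le hxy).2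
      (hint.mono_set fun u hu => hx.trans hu.1)
  simp only [Function.comp_apply, id_eq] at hs
  rw [intervalIntegral.integral_interval_sub_left (hii b s le_rfl hbs')
    (hii b (s / 2) le_rfl hbs)] at hs
  have hlow : ∫ _ in (s / 2)..s, 1 / g s ≤ ∫ u in (s / 2)..s, 1 / g u := by
    refine intervalIntegral.integral_mono_on hss (by simp) (hii _ _ hbs hss) fun u hu => ?_
    have hbu : b ≤ u := hbs.trans hu.1
    exact one_div_le_one_div_of_le (hgpos u hbu) (hmono hbu hbs' hu.2)
  rw [intervalIntegral.integral_const, smul_eq_mul] at hlow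
  have hg := hgpos s hbs'
  have hlt := hlow.trans_lt hs
  rw [show (s - s / 2) * (1 / g s) = s / (2 * g s) by field_simp; ring,
    div_lt_div_iff₀ (by positivity) (by positivity)] at hlt
  linarith

/-- If z is a C² singular solution of
-z'' = (1/4) e^{g(z)-ρ} on (ρ₀,∞) with z(ρ) → ∞, and g satisfies (G1),
then z'(ρ) → 0, z' ≥ 0 for large ρ, and z'(ρ) = ∫_ρ^∞ (1/4)e^{g(z(s))-s} ds. -/
theorem stmt_12 (g z : ℝ → ℝ) (s₀ ρ₀ q : ℝ) (hq : 1 ≤ q)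
    (hC2 : ContDiffOn ℝ 2 g (Ici s₀))
    (hgpos : ∀ s ∈ Ici s₀, 0 < g s)
    (hint : ∀ᶠ s in atTop, IntegrableOn (fun u => 1 / g u) (Ici s))
    (hlim : Tendsto (fun s => g s * deriv (deriv g) s / (deriv g s) ^ 2)
      atTop (nhds (1 / q)))
    (hz : ContDiffOn ℝ 2 z (Ioi ρ₀))
    (hzeq : ∀ ρ ∈ Ioi ρ₀,
      -(deriv (deriv z) ρ) = (1 / 4) * Real.exp (g (z ρ) - ρ))
    (hzinf : Tendsto z atTop atTop) :
    Tendsto (deriv z) atTop (nhds 0) ∧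
    (∀ᶠ ρ in atTop, 0 ≤ deriv z ρ) ∧
    (∀ ρ ∈ Ioi ρ₀,
      deriv z ρ = ∫ s in Ici ρ, (1 / 4) * Real.exp (g (z s) - s)) := by
  have hq0 : 0 < 1 / q := by positivity
  have hsuper : ∀ C > 0, ∀ᶠ s in atTop, C * s ≤ g s := fun C hC => by
    obtain ⟨b, hb, hbint, hbmono⟩ := exists_monotoneOn_Ici_of_tendsto hq0 hgpos hint hlim
    exact eventually_mul_le_of_integrableOn_one_div
      (fun s hs => hgpos s (hb.trans hs)) hbint hbmono hC
  have hz1 : ∀ ρ ∈ Ioi ρ₀, DifferentiableAt ℝ z ρ := fun ρ hρ =>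
    (hz.contDiffAt (Ioi_mem_nhds hρ)).differentiableAt (by norm_num)
  have hz2neg : ∀ ρ ∈ Ioi ρ₀, deriv (deriv z) ρ < 0 := fun ρ hρ => by
    have h1 := hzeq ρ hρ
    have h2 := Real.exp_pos (g (z ρ) - ρ)
    linarith
  have hz2 : ∀ ρ ∈ Ioi ρ₀, DifferentiableAt ℝ (deriv z) ρ := fun ρ hρ =>
    differentiableAt_of_deriv_ne_zero (hz2neg ρ hρ).ne
  have hanti : AntitoneOn (deriv z) (Ioi ρ₀) := antitoneOn_of_deriv_nonpos (convex_Ioi ρ₀)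
    (fun s hs => (hz2 s hs).continuousAt.continuousWithinAt)
    (fun s hs => (hz2 s (interior_subset hs)).differentiableWithinAt)
    fun s hs => (hz2neg s (interior_subset hs)).le
  have hsub : ∀ {a}, a ∈ Ioi ρ₀ → Ici a ⊆ Ioi ρ₀ := fun ha => Ici_subset_Ioi.2 ha
  have hnonneg : ∀ ρ ∈ Ioi ρ₀, 0 ≤ deriv z ρ := by
    intro a ha
    by_contra! hneg
    have hza : AntitoneOn z (Ici a) := antitoneOn_of_deriv_nonpos (convex_Ici a)
      (fun s hs => (hz1 s (hsub ha hs)).continuousAt.continuousWithinAt)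
      (fun s hs => (hz1 s (hsub ha (interior_subset hs))).differentiableWithinAt)
      fun s hs => (hanti ha (hsub ha (interior_subset hs)) (interior_subset hs)).trans hneg.le
    obtain ⟨x, hx, hax⟩ := ((hzinf.eventually_gt_atTop (z a)).and (eventually_ge_atTop a)).exists
    exact absurd (hza self_mem_Ici hax hax) (not_le.2 hx)
  have hlt : ∀ ε > 0, ∃ a ∈ Ioi ρ₀, deriv z a < ε := by
    intro ε hε
    by_contra! hge
    have ha : ρ₀ + 1 ∈ Ioi ρ₀ := by simp
    set a := ρ₀ + 1
    have hlin : ∀ᶠ ρ in atTop, ρ ≤ (2 / ε) * z ρ := by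
      filter_upwards [eventually_ge_atTop a,
        eventually_ge_atTop ((2 / ε) * (ε * a - z a))] with ρ hρ hρ'
      have h := (convex_Ici a).mul_sub_le_image_sub_of_le_deriv
        (fun s hs => (hz1 s (hsub ha hs)).continuousAt.continuousWithinAt)
        (fun s hs => (hz1 s (hsub ha (interior_subset hs))).differentiableWithinAt)
        (fun s hs => hge s (hsub ha (interior_subset hs))) a self_mem_Ici ρ hρ hρ
      have h' := mul_le_mul_of_nonneg_left h (by positivity : 0 ≤ 2 / ε)
      have e : 2 / ε * (ε * (ρ - a)) = 2 * ρ - 2 / ε * (ε * a) := by field_simp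
      rw [e] at h'
      linarith
    obtain ⟨b, hb⟩ := eventually_atTop.1 (hlin.and
      ((hzinf.eventually (hsuper (2 / ε) (by positivity))).and (eventually_gt_atTop ρ₀)))
    have hbI : b ∈ Ioi ρ₀ := (hb b le_rfl).2.2
    have hle : b ≤ b + 4 * (deriv z b + 1) := by have := hnonneg b hbI; linarith
    have h := (convex_Ici b).image_sub_le_mul_sub_of_deriv_le (C := -(1 / 4))
      (fun s hs => (hz2 s (hsub hbI hs)).continuousAt.continuousWithinAt)
      (fun s hs => (hz2 s (hsub hbI (interior_subset hs))).differentiableWithinAt)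
      (fun s hs => by
        have hs' : b ≤ s := interior_subset hs
        have h1 := hzeq s (hsub hbI hs')
        have h2 : 1 ≤ Real.exp (g (z s) - s) :=
          Real.one_le_exp (by have := hb s hs'; linarith [this.1, this.2.1])
        linarith) b self_mem_Ici _ hle hle
    have h0 := hnonneg _ (hsub hbI hle)
    linarith
  have htend : Tendsto (deriv z) atTop (nhds 0) := by
    refine tendsto_order.2 ⟨fun c hc => ?_, fun ε hε => ?_⟩
    · filter_upwards [eventually_gt_atTop ρ₀] with ρ hρ using hc.trans_le (hnonneg ρ hρ)
    · obtain ⟨a, ha, hlta⟩ := hlt ε hε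
      filter_upwards [eventually_ge_atTop a] with ρ hρ
      exact (hanti ha (hsub ha hρ) hρ).trans_lt hlta
  refine ⟨htend, (eventually_gt_atTop ρ₀).mono hnonneg, fun ρ hρ => ?_⟩
  have hFTC := integral_Ioi_of_hasDerivAt_of_nonpos' (a := ρ)
    (fun s hs => (hz2 s (hsub hρ hs)).hasDerivAt)
    (fun s hs => (hz2neg s (hsub hρ (Ioi_subset_Ici_self hs))).le) htend
  rw [integral_Ici_eq_integral_Ioi,
    setIntegral_congr_fun measurableSet_Ioi fun s hs => (hzeq s (hsub hρ (Ioi_subset_Ici_self hs))).symm,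
    integral_neg, hFTC]
  ring
end

section
/- (Hardy-type inequality on the unit disk) Let R ≥ 1. For every Lipschitz function φ with compact support in the unit ball B₁ ⊂ ℝ², one has (1/4)∫_{B₁} φ(x)² / (|x|² (log(R/|x|))²) dx ≤ ∫_{B₁} |∇φ(x)|² dx. -/
open Real Filter Set MeasureTheory Metric

theorem hasDerivAt_inv_log_div {R r : ℝ} (hR : 1 ≤ R) (h0 : 0 < r) (h1 : r < 1) :
    HasDerivAt (fun t ↦ (log (R / t))⁻¹) (r⁻¹ * ((log (R / r))⁻¹) ^ 2) r := by
  have hL : log (R / r) ≠ 0 := (log_pos ((one_lt_div h0).2 (h1.trans_le hR))).ne'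
  have hRr : R / r ≠ 0 := by positivity
  have h := (((hasDerivAt_inv h0.ne').const_mul R).log (by simpa [div_eq_mul_inv] using hRr)).inv
    (by simpa [div_eq_mul_inv] using hL)
  simp only [div_eq_mul_inv] at hL ⊢
  convert! h using 1
  have : R ≠ 0 := by positivity
  field_simp

theorem absolutelyContinuousOnInterval_inv_log_div {R a b : ℝ} (hR : 1 ≤ R) (ha : 0 < a)
    (hab : a ≤ b) (hb : b < 1) :
    AbsolutelyContinuousOnInterval (fun t ↦ (log (R / t))⁻¹) a b := by
  have hd : ∀ r ∈ Icc a b, HasDerivAt (fun t ↦ (log (R / t))⁻¹)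
      (r⁻¹ * ((log (R / r))⁻¹) ^ 2) r := fun r hr ↦
    hasDerivAt_inv_log_div hR (ha.trans_le hr.1) (hr.2.trans_lt hb)
  have hc : ContinuousOn (fun t ↦ (log (R / t))⁻¹) (Icc a b) := fun r hr ↦
    (hd r hr).continuousAt.continuousWithinAt
  have hc' : ContinuousOn (fun r ↦ r⁻¹ * ((log (R / r))⁻¹) ^ 2) (Icc a b) :=
    (continuousOn_id.inv₀ fun r hr ↦ (ha.trans_le hr.1).ne').mul (hc.pow 2)
  obtain ⟨C, hC⟩ := isCompact_Icc.exists_bound_of_continuousOn hc'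
  refine LipschitzOnWith.absolutelyContinuousOnInterval (K := C.toNNReal) ?_
  rw [uIcc_of_le hab]
  refine (convex_Icc a b).lipschitzOnWith_of_nnnorm_hasDerivWithin_le
    (fun r hr ↦ (hd r hr).hasDerivWithinAt) fun r hr ↦ ?_
  rw [← NNReal.coe_le_coe]
  exact (hC r hr).trans (le_coe_toNNReal C)

/-- The logarithmic Hardy inequality in one variable, away from the origin. -/
theorem intervalIntegral_hardy_log {R a b : ℝ} (hR : 1 ≤ R) (ha : 0 < a) (hab : a ≤ b)
    (hb : b < 1) {g : ℝ → ℝ} {K : NNReal} (hg : LipschitzWith K g) (hgb : g b = 0) :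
    IntervalIntegrable (fun r ↦ 1 / 4 * (g r ^ 2 / (r * log (R / r) ^ 2))) volume a b ∧
    IntervalIntegrable (fun r ↦ r * deriv g r ^ 2) volume a b ∧
    ∫ r in a..b, 1 / 4 * (g r ^ 2 / (r * log (R / r) ^ 2)) ≤ ∫ r in a..b, r * deriv g r ^ 2 := by
  have hL : ∀ r ∈ Icc a b, 0 < log (R / r) := fun r hr ↦
    log_pos ((one_lt_div (ha.trans_le hr.1)).2 ((hr.2.trans_lt hb).trans_le hR))
  have hgac : AbsolutelyContinuousOnInterval g a b :=
    (hg.lipschitzOnWith (s := uIcc a b)).absolutelyContinuousOnInterval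
  have hhac := absolutelyContinuousOnInterval_inv_log_div hR ha hab hb
  have hF := (hgac.fun_mul hgac).fun_mul hhac
  have hint₁ : IntervalIntegrable (fun r ↦ 1 / 4 * (g r ^ 2 / (r * log (R / r) ^ 2)))
      volume a b := by
    refine ContinuousOn.intervalIntegrable ?_
    rw [uIcc_of_le hab]
    intro r hr
    have h0 := ha.trans_le hr.1
    have hl := hL r hr
    refine ContinuousAt.continuousWithinAt ?_
    have : R / r ≠ 0 := by positivity
    have : r * log (R / r) ^ 2 ≠ 0 := by positivity
    have := hg.continuous.continuousAt (x := r)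
    have := h0.ne'
    fun_prop (disch := assumption)
  have hint₂ : IntervalIntegrable (fun r ↦ r * deriv g r ^ 2) volume a b := by
    have h : IntervalIntegrable (fun r ↦ deriv g r ^ 2) volume a b := by
      refine (intervalIntegrable_const (c := (K : ℝ) ^ 2)).mono_fun
        ((measurable_deriv g).pow_const 2).aestronglyMeasurable (Eventually.of_forall fun r ↦ ?_)
      simp only [norm_pow, Real.norm_eq_abs, sq_abs, NNReal.abs_eq]
      exact sq_le_sq' (by linarith [abs_le.1 (norm_deriv_le_of_lipschitz hg (x₀ := r))])
        (abs_le.1 (norm_deriv_le_of_lipschitz hg (x₀ := r))).2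
    exact h.continuousOn_mul continuousOn_id
  refine ⟨hint₁, hint₂, ?_⟩
  have hFint := hF.integral_deriv_eq_sub
  have hmono : ∫ r in a..b, 1 / 4 * (g r ^ 2 / (r * log (R / r) ^ 2)) ≤
      ∫ r in a..b, (r * deriv g r ^ 2 +
        1 / 2 * deriv (fun r ↦ g r * g r * (log (R / r))⁻¹) r) := by
    refine intervalIntegral.integral_mono_ae_restrict hab hint₁
      (hint₂.add (hF.intervalIntegrable_deriv.const_mul _)) ?_
    rw [EventuallyLE, ae_restrict_iff' measurableSet_Icc]
    filter_upwards [hg.ae_differentiableAt_real] with r hgr hr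
    have h0 := ha.trans_le hr.1
    have hl := hL r hr
    rw [((hgr.hasDerivAt.fun_mul hgr.hasDerivAt).fun_mul
      (hasDerivAt_inv_log_div hR h0 (hr.2.trans_lt hb))).deriv, ← sub_nonneg]
    have key : 0 ≤ (r * deriv g r + g r * (log (R / r))⁻¹ / 2) ^ 2 / r := by positivity
    convert! key using 1
    field_simp
    ring
  rw [intervalIntegral.integral_add hint₂ (hF.intervalIntegrable_deriv.const_mul _),
    intervalIntegral.integral_const_mul (1 / 2), hFint, hgb] at hmono
  have : 0 ≤ g a * g a * (log (R / a))⁻¹ :=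
    mul_nonneg (mul_self_nonneg _) (inv_nonneg.2 (hL a ⟨le_rfl, hab⟩).le)
  linarith

/-- The logarithmic Hardy inequality on the half-line, for lower Lebesgue integrals. -/
theorem setLIntegral_hardy_log {R b : ℝ} (hR : 1 ≤ R) (hb : b < 1) {g : ℝ → ℝ} {K : NNReal}
    (hg : LipschitzWith K g) (hgb : ∀ r, b ≤ r → g r = 0) :
    ∫⁻ r in Ioi 0, ENNReal.ofReal (1 / 4 * (g r ^ 2 / (r * log (R / r) ^ 2))) ≤
      ∫⁻ r in Ioi 0, ENNReal.ofReal (r * deriv g r ^ 2) := by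
  have hU : Ioi (0 : ℝ) = ⋃ n : ℕ, Ioi (1 / ((n : ℝ) + 1)) := by
    ext r
    simp only [mem_Ioi, mem_iUnion]
    exact ⟨exists_nat_one_div_lt, fun ⟨n, hn⟩ ↦ lt_trans (by positivity) hn⟩
  have hdir : Directed (· ⊆ ·) fun n : ℕ ↦ Ioi (1 / ((n : ℝ) + 1)) :=
    Monotone.directed_le fun m n hmn ↦ Ioi_subset_Ioi (Nat.one_div_le_one_div hmn)
  nth_rw 1 [hU]
  rw [setLIntegral_iUnion_of_directed _ hdir]
  refine iSup_le fun n ↦ ?_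
  have ha : 0 < 1 / ((n : ℝ) + 1) := by positivity
  generalize 1 / ((n : ℝ) + 1) = a at ha
  have hzero : ∫⁻ r in Ioi b, ENNReal.ofReal (1 / 4 * (g r ^ 2 / (r * log (R / r) ^ 2))) = 0 := by
    refine setLIntegral_eq_zero measurableSet_Ioi fun r hr ↦ ?_
    simp [hgb r (le_of_lt hr)]
  calc ∫⁻ r in Ioi a, ENNReal.ofReal (1 / 4 * (g r ^ 2 / (r * log (R / r) ^ 2)))
      ≤ ∫⁻ r in Ioc a b ∪ Ioi b, ENNReal.ofReal (1 / 4 * (g r ^ 2 / (r * log (R / r) ^ 2))) :=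
        lintegral_mono_set fun r hr ↦ (le_or_gt r b).imp (fun h ↦ ⟨hr, h⟩) id
    _ ≤ ∫⁻ r in Ioc a b, ENNReal.ofReal (1 / 4 * (g r ^ 2 / (r * log (R / r) ^ 2))) :=
        (lintegral_union_le _ _ _).trans (by rw [hzero, add_zero])
    _ ≤ ∫⁻ r in Ioc a b, ENNReal.ofReal (r * deriv g r ^ 2) := by
        rcases lt_or_ge b a with hab | hab
        · simp [Ioc_eq_empty_of_le hab.le]
        obtain ⟨hi₁, hi₂, hle⟩ := intervalIntegral_hardy_log hR ha hab hb hg (hgb b le_rfl)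
        rw [intervalIntegral.integral_of_le hab, intervalIntegral.integral_of_le hab] at hle
        have hpos : ∀ᵐ r ∂volume.restrict (Ioc a b), 0 < r :=
          (ae_restrict_mem measurableSet_Ioc).mono fun r hr ↦ ha.trans hr.1
        rw [← ofReal_integral_eq_lintegral_ofReal hi₁.1 (hpos.mono fun r hr ↦ by positivity),
          ← ofReal_integral_eq_lintegral_ofReal hi₂.1 (hpos.mono fun r hr ↦ by positivity)]
        exact ENNReal.ofReal_le_ofReal hle
    _ ≤ ∫⁻ r in Ioi 0, ENNReal.ofReal (r * deriv g r ^ 2) :=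
        lintegral_mono_set fun r hr ↦ ha.trans hr.1

/-- Tonelli's theorem in polar coordinates: an inequality between the radial integrals along every
ray implies the inequality between the planar integrals. -/
theorem lintegral_le_of_forall_ray {F G : EuclideanSpace ℝ (Fin 2) → ENNReal}
    (hF : Measurable F) (hG : Measurable G)
    (h : ∀ u : EuclideanSpace ℝ (Fin 2), ‖u‖ = 1 →
      ∫⁻ r in Ioi (0 : ℝ), ENNReal.ofReal r * F (r • u) ≤
        ∫⁻ r in Ioi (0 : ℝ), ENNReal.ofReal r * G (r • u)) :
    ∫⁻ x, F x ≤ ∫⁻ x, G x := by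
  let e := Complex.orthonormalBasisOneI.repr
  let u : ℝ → EuclideanSpace ℝ (Fin 2) := fun θ ↦ e (Real.cos θ + Real.sin θ * Complex.I)
  have hu : Measurable u := by
    refine e.continuous.measurable.comp (Continuous.measurable ?_)
    fun_prop
  have hu1 (θ : ℝ) : ‖u θ‖ = 1 := by
    rw [e.norm_map, Complex.ofReal_cos, Complex.ofReal_sin, ← Complex.exp_mul_I,
      Complex.norm_exp_ofReal_mul_I]
  have hpolar {H : EuclideanSpace ℝ (Fin 2) → ENNReal} (hH : Measurable H) :
      ∫⁻ x, H x = ∫⁻ θ in Ioo (-π) π, ∫⁻ r in Ioi (0 : ℝ), ENNReal.ofReal r * H (r • u θ) := by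
    rw [← Complex.orthonormalBasisOneI.measurePreserving_repr.lintegral_comp hH,
      ← Complex.lintegral_comp_polarCoord_symm, polarCoord_target, Measure.volume_eq_prod,
      ← Measure.prod_restrict]
    have hray (p : ℝ × ℝ) : e (Complex.polarCoord.symm p) = p.1 • u p.2 := by
      rw [Complex.polarCoord_symm_apply, ← Complex.real_smul, map_smul]
    simp only [smul_eq_mul]
    change ∫⁻ p : ℝ × ℝ, ENNReal.ofReal p.1 * H (e (Complex.polarCoord.symm p)) ∂_ = _
    simp only [hray]
    rw [lintegral_prod_symm' _ (by fun_prop)]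
  rw [hpolar hF, hpolar hG]
  exact lintegral_mono fun θ ↦ h (u θ) (hu1 θ)

/-- The logarithmic Hardy inequality on the unit disk, for lower Lebesgue integrals. -/
theorem lintegral_hardy_log {R : ℝ} (hR : 1 ≤ R) {φ : EuclideanSpace ℝ (Fin 2) → ℝ} {K : NNReal}
    (hφ : LipschitzWith K φ) (hsupp : tsupport φ ⊆ ball (0 : EuclideanSpace ℝ (Fin 2)) 1) :
    ∫⁻ x, ENNReal.ofReal (1 / 4 * (φ x ^ 2 / (‖x‖ ^ 2 * log (R / ‖x‖) ^ 2))) ≤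
      ∫⁻ x, ENNReal.ofReal (‖fderiv ℝ φ x‖ ^ 2) := by
  classical
  obtain ⟨b, hb, hφb⟩ := exists_lt_subset_ball (isClosed_tsupport φ) hsupp
  -- The value `⊤` off the differentiability set makes the radial comparison hold on every ray.
  let G : EuclideanSpace ℝ (Fin 2) → ENNReal := fun x ↦
    if DifferentiableAt ℝ φ x then ENNReal.ofReal (‖fderiv ℝ φ x‖ ^ 2) else ⊤
  have hφm : Measurable φ := hφ.continuous.measurable
  have hGae : ∫⁻ x, ENNReal.ofReal (‖fderiv ℝ φ x‖ ^ 2) = ∫⁻ x, G x :=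
    lintegral_congr_ae (hφ.ae_differentiableAt.mono fun x hx ↦ by simp [G, hx])
  have hGm : Measurable G :=
    Measurable.ite (measurableSet_of_differentiableAt ℝ φ)
      ((measurable_fderiv ℝ φ).norm.pow_const 2).ennreal_ofReal measurable_const
  rw [hGae]
  refine lintegral_le_of_forall_ray (by fun_prop) hGm fun u hu ↦ ?_
  have hg : LipschitzWith K fun r : ℝ ↦ φ (r • u) := by
    refine LipschitzWith.of_dist_le_mul fun r s ↦ (hφ.dist_le_mul _ _).trans_eq ?_
    rw [dist_eq_norm, ← sub_smul, norm_smul, hu, mul_one, dist_eq_norm]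
  have hgb (r : ℝ) (hr : b ≤ r) : φ (r • u) = 0 := by
    by_contra hne
    have := hφb (subset_tsupport φ hne)
    rw [mem_ball_zero_iff, norm_smul, hu, mul_one] at this
    exact (this.trans_le hr).not_ge (le_abs_self r)
  refine le_trans (le_of_eq ?_) ((setLIntegral_hardy_log hR hb hg hgb).trans ?_)
  · refine setLIntegral_congr_fun measurableSet_Ioi fun r (hr : 0 < r) ↦ ?_
    simp only [norm_smul, hu, mul_one, Real.norm_of_nonneg hr.le]
    rw [← ENNReal.ofReal_mul hr.le]
    congr 1
    field_simp
  · refine setLIntegral_mono' measurableSet_Ioi fun r (hr : 0 < r) ↦ ?_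
    by_cases hd : DifferentiableAt ℝ φ (r • u)
    · have hderiv : HasDerivAt (fun r : ℝ ↦ φ (r • u)) (fderiv ℝ φ (r • u) u) r := by
        simpa using! hd.hasFDerivAt.comp_hasDerivAt r ((hasDerivAt_id r).smul_const u)
      simp only [G, hd, if_true]
      rw [hderiv.deriv, ← ENNReal.ofReal_mul hr.le]
      refine ENNReal.ofReal_le_ofReal (mul_le_mul_of_nonneg_left ?_ hr.le)
      rw [sq_le_sq, abs_norm]
      simpa [hu] using (fderiv ℝ φ (r • u)).le_opNorm u
    · simp [G, hd, ENNReal.mul_top, hr]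

/-- Hardy-type inequality on the unit disk: for R ≥ 1 and any
Lipschitz φ with compact support contained in the unit disk B₁ ⊂ ℝ²,
(1/4)∫_{B₁} φ²/(|x|²(log(R/|x|))²) ≤ ∫_{B₁} |∇φ|². -/
theorem stmt_15 (R : ℝ) (hR : 1 ≤ R)
    (φ : EuclideanSpace ℝ (Fin 2) → ℝ) (K : NNReal)
    (hφ : LipschitzWith K φ)
    (hsupp : tsupport φ ⊆ ball (0 : EuclideanSpace ℝ (Fin 2)) 1) :
    (1 / 4) * ∫ x in ball (0 : EuclideanSpace ℝ (Fin 2)) 1,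
        (φ x) ^ 2 / (‖x‖ ^ 2 * (Real.log (R / ‖x‖)) ^ 2) ≤
      ∫ x in ball (0 : EuclideanSpace ℝ (Fin 2)) 1, ‖fderiv ℝ φ x‖ ^ 2 := by
  have hzero : ∀ x ∉ ball (0 : EuclideanSpace ℝ (Fin 2)) 1, x ∉ tsupport φ :=
    fun x hx hx' ↦ hx (hsupp hx')
  rw [setIntegral_eq_integral_of_forall_compl_eq_zero fun x hx ↦ by
      simp [image_eq_zero_of_notMem_tsupport (hzero x hx)],
    setIntegral_eq_integral_of_forall_compl_eq_zero fun x hx ↦ by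
      simp [fderiv_of_notMem_tsupport ℝ (hzero x hx)],
    ← integral_const_mul]
  have hφm : Measurable φ := hφ.continuous.measurable
  have hfin : ∫⁻ x, ENNReal.ofReal (‖fderiv ℝ φ x‖ ^ 2) ≠ ⊤ := by
    rw [← setLIntegral_eq_of_support_subset (s := ball 0 1) fun x hx ↦ by
      contrapose! hx
      rw [Function.notMem_support, fderiv_of_notMem_tsupport ℝ (hzero x hx), norm_zero]
      simp]
    refine (setLIntegral_lt_top_of_le_nnreal measure_ball_lt_top.ne ⟨K ^ 2, fun x _ ↦ ?_⟩).ne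
    rw [← ENNReal.ofReal_coe_nnreal]
    refine ENNReal.ofReal_le_ofReal ?_
    push_cast
    gcongr
    exact norm_fderiv_le_of_lipschitz ℝ hφ
  rw [integral_eq_lintegral_of_nonneg_ae (Eventually.of_forall fun x ↦ by positivity)
      (Measurable.aestronglyMeasurable (by fun_prop)),
    integral_eq_lintegral_of_nonneg_ae (Eventually.of_forall fun x ↦ by positivity)
      ((measurable_fderiv ℝ φ).norm.pow_const 2).aestronglyMeasurable]
  exact ENNReal.toReal_mono hfin (lintegral_hardy_log hR hφ hsupp)
end
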